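/- For every t > 0 and every a > 0, the function u ↦ E[ (A_t − u)^+ ] is differentiable at a with derivative −1 + e^{-2/a} · E[ exp( 2·exp(B_t − t/2) / (a + A_t) ) ]. -/

import Mathlib

open MeasureTheory ProbabilityTheory Real Set

noncomputable section

/-- A standard one-dimensional Brownian motion `B` (with `B 0 = 0`, continuous
paths, Gaussian increments and independent increments) on a probability space
with measure `P`. -/
structure IsBrownianMotion {Ω : Type*} [MeasurableSpace Ω]
    (P : Measure Ω) (B : ℝ → Ω → ℝ) : Prop where
  isProbabilityMeasure : IsProbabilityMeasure P
  measurable : ∀ t : ℝ, Measurable (B t)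
  start : ∀ ω, B 0 ω = 0
  continuous_paths : ∀ ω, Continuous fun t => B t ω
  gaussian_increments : ∀ s t : ℝ, 0 ≤ s → s ≤ t →
    P.map (fun ω => B t ω - B s ω) = gaussianReal 0 (Real.toNNReal (t - s))
  indep_increments : ∀ t : ℕ → ℝ, Monotone t → 0 ≤ t 0 →
    iIndepFun
      (fun (i : ℕ) (ω : Ω) => B (t (i + 1)) ω - B (t i) ω) P

/-- The exponential martingale `M_t = exp (B_t - t/2)`. -/
def M {Ω : Type*} (B : ℝ → Ω → ℝ) (t : ℝ) (ω : Ω) : ℝ :=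
  Real.exp (B t ω - t / 2)

/-- The time integral `A_t = ∫_0^t exp (B_s - s/2) ds`. -/
def A {Ω : Type*} (B : ℝ → Ω → ℝ) (t : ℝ) (ω : Ω) : ℝ :=
  ∫ s in (0 : ℝ)..t, Real.exp (B s ω - s / 2)

/-- The time integral with drift `ν`: `A_t^{(ν)} = ∫_0^t exp (B_s + (ν - 1/2) s) ds`. -/
def Adrift {Ω : Type*} (B : ℝ → Ω → ℝ) (ν t : ℝ) (ω : Ω) : ℝ :=
  ∫ s in (0 : ℝ)..t, Real.exp (B s ω + (ν - 1 / 2) * s)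

section Aux

def rP (h z x : ℝ) : ℝ := Real.log (1 + h * z * Real.exp (x / 2))
def rM (h z x : ℝ) : ℝ := - Real.log (1 - h * z * Real.exp (x / 2))

lemma exp_rP {h z : ℝ} (hh : 0 < h) (hz : 0 < z) (x : ℝ) :
    Real.exp (rP h z x) = 1 + h * z * Real.exp (x / 2) := by
  unfold rP; rw [Real.exp_log]; positivity

lemma exp_neg_rM {h z x : ℝ} (hx : h * z * Real.exp (x / 2) < 1) :
    Real.exp (- rM h z x) = 1 - h * z * Real.exp (x / 2) := by
  unfold rM; rw [neg_neg, Real.exp_log]; linarith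

def phiP (h z x : ℝ) : ℝ := x - 2 * rP h z x
def phiM (h z x : ℝ) : ℝ := x + 2 * rM h z x

lemma exp_half_phiP (h z x : ℝ) : Real.exp (phiP h z x / 2) = Real.exp (x/2) * Real.exp (-rP h z x) := by
  rw [← Real.exp_add]; congr 1; unfold phiP; ring

lemma alive_phiP {h z : ℝ} (hh : 0 < h) (hz : 0 < z) (x : ℝ) :
    1 - h * z * Real.exp (phiP h z x / 2) = Real.exp (- rP h z x) := by
  rw [exp_half_phiP, Real.exp_neg, exp_rP hh hz]
  have : 0 < 1 + h * z * Real.exp (x / 2) := by positivity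
  field_simp; ring

lemma rM_phiP {h z : ℝ} (hh : 0 < h) (hz : 0 < z) (x : ℝ) :
    rM h z (phiP h z x) = rP h z x := by
  unfold rM; rw [alive_phiP hh hz, Real.log_exp, neg_neg]

lemma phiM_phiP {h z : ℝ} (hh : 0 < h) (hz : 0 < z) (x : ℝ) :
    phiM h z (phiP h z x) = x := by
  unfold phiM; rw [rM_phiP hh hz]; unfold phiP; ring

lemma phiP_phiM {h z x : ℝ} (hx : h * z * Real.exp (x / 2) < 1) :
    phiP h z (phiM h z x) = x := by
  have h1 : Real.exp (phiM h z x / 2) = Real.exp (x/2) * Real.exp (rM h z x) := by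
    rw [← Real.exp_add]; congr 1; unfold phiM; ring
  have h2 : Real.exp (rM h z x) = (1 - h * z * Real.exp (x / 2))⁻¹ := by
    rw [← exp_neg_rM hx, Real.exp_neg, inv_inv]
  have h3 : rP h z (phiM h z x) = rM h z x := by
    have : 0 < 1 - h * z * Real.exp (x / 2) := by linarith
    have h4 : 1 + h * z * Real.exp (phiM h z x / 2) = Real.exp (rM h z x) := by
      rw [h1, h2]; field_simp; ring
    unfold rP; rw [h4, Real.log_exp]
  unfold phiP; rw [h3]; unfold phiM; ring

lemma image_phiP {h z : ℝ} (hh : 0 < h) (hz : 0 < z) :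
    phiP h z '' univ = {y | h * z * Real.exp (y / 2) < 1} := by
  ext y
  simp only [image_univ, mem_range, mem_ofPred_eq]
  constructor
  · rintro ⟨x, rfl⟩
    have := alive_phiP hh hz x
    have := Real.exp_pos (- rP h z x)
    linarith
  · intro hy; exact ⟨_, phiP_phiM hy⟩

lemma hasDerivAt_phiP {h z : ℝ} (hh : 0 < h) (hz : 0 < z) (x : ℝ) :
    HasDerivAt (phiP h z) (Real.exp (-rP h z x)) x := by
  have h0 : 0 < 1 + h * z * Real.exp (x / 2) := by positivity
  have h1 : HasDerivAt (fun x : ℝ => 1 + h * z * Real.exp (x / 2))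
      (h * z * (Real.exp (x / 2) * (1/2))) x := by
    have := ((((hasDerivAt_id x).div_const 2).exp).const_mul (h * z)).const_add 1
    simpa using this
  have h2 := (hasDerivAt_id x).sub ((h1.log h0.ne').const_mul 2)
  refine h2.congr_deriv ?_
  rw [Real.exp_neg, exp_rP hh hz]
  field_simp; ring

/-- one-step change of variables -/
lemma one_step {h z : ℝ} (hh : 0 < h) (hz : 0 < z) (g : ℝ → ENNReal) :
    ∫⁻ x, ENNReal.ofReal (Real.exp (2 * rP h z x * (x - rP h z x) / h)) * g (phiP h z x)
        ∂(gaussianReal (-h/2) h.toNNReal)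
      = ∫⁻ y in {y | h * z * Real.exp (y / 2) < 1}, g y ∂(gaussianReal (-h/2) h.toNNReal) := by
  have hv : h.toNNReal ≠ 0 := by simpa using hh
  have hms : MeasurableSet {y : ℝ | h * z * Real.exp (y / 2) < 1} :=
    measurableSet_lt (by fun_prop) (by fun_prop)
  have hfin : ∀ x, gaussianPDF (-h/2) h.toNNReal x < ⊤ := fun x => by
    simp [gaussianPDF]
  rw [gaussianReal_of_var_ne_zero _ hv, restrict_withDensity hms,
    lintegral_withDensity_eq_lintegral_mul_non_measurable _ (measurable_gaussianPDF _ _)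
      (ae_of_all _ hfin),
    lintegral_withDensity_eq_lintegral_mul_non_measurable _ (measurable_gaussianPDF _ _)
      (ae_of_all _ hfin), ← image_phiP hh hz,
    lintegral_image_eq_lintegral_abs_deriv_mul MeasurableSet.univ
      (fun x _ => (hasDerivAt_phiP hh hz x).hasDerivWithinAt)
      (fun x _ y _ hxy => by rw [← phiM_phiP hh hz x, hxy, phiM_phiP hh hz])]
  rw [Measure.restrict_univ]
  refine lintegral_congr fun x => ?_
  simp only [Pi.mul_apply]
  rw [← mul_assoc, ← mul_assoc]
  congr 1
  unfold gaussianPDF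
  rw [← ENNReal.ofReal_mul (gaussianPDFReal_nonneg _ _ _), ← ENNReal.ofReal_mul (abs_nonneg _),
    abs_of_pos (Real.exp_pos _)]
  congr 1
  unfold gaussianPDFReal
  rw [mul_assoc, mul_left_comm (Real.exp (-rP h z x)), ← Real.exp_add, ← Real.exp_add]
  congr 2
  rw [Real.coe_toNNReal _ hh.le]
  unfold phiP
  field_simp; ring

def stepP (h : ℝ) (s : ℝ × ℝ) (x : ℝ) : ℝ × ℝ :=
  (s.1 * Real.exp (x - rP h s.1 x), s.2 + 2 * rP h s.1 x * (x - rP h s.1 x) / h)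

def stepM (h : ℝ) (s : ℝ × ℝ) (x : ℝ) : ℝ × ℝ :=
  (if h * s.1 * Real.exp (x / 2) < 1 then s.1 * Real.exp (x + rM h s.1 x) else 0,
    s.2 + 2 * rM h s.1 x * (x + rM h s.1 x) / h)

lemma measurable_stepP (h : ℝ) : Measurable (fun p : (ℝ × ℝ) × ℝ => stepP h p.1 p.2) := by
  unfold stepP rP; fun_prop

lemma measurable_stepM (h : ℝ) : Measurable (fun p : (ℝ × ℝ) × ℝ => stepM h p.1 p.2) := by
  unfold stepM rM
  refine Measurable.prodMk (Measurable.ite (measurableSet_lt (by fun_prop) (by fun_prop))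
    (by fun_prop) (by fun_prop)) (by fun_prop)

lemma stepM_phiP {h : ℝ} (hh : 0 < h) (s : ℝ × ℝ) (hz : 0 < s.1) (x : ℝ) :
    stepM h s (phiP h s.1 x) = stepP h s x := by
  have h1 := alive_phiP hh hz x
  have h2 := Real.exp_pos (- rP h s.1 x)
  have h3 : phiP h s.1 x + rP h s.1 x = x - rP h s.1 x := by unfold phiP; ring
  unfold stepM stepP
  rw [rM_phiP hh hz, if_pos (by linarith), h3]

/-- transition operator -/
def Op (step : ℝ × ℝ → ℝ → ℝ × ℝ) (γ : Measure ℝ) (f : ℝ × ℝ → ENNReal) (s : ℝ × ℝ) : ENNReal :=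
  ∫⁻ x, f (step s x) ∂γ

lemma measurable_Op {step : ℝ × ℝ → ℝ → ℝ × ℝ} (hs : Measurable (fun p : (ℝ × ℝ) × ℝ => step p.1 p.2))
    (γ : Measure ℝ) [SFinite γ] {f : ℝ × ℝ → ENNReal} (hf : Measurable f) :
    Measurable (Op step γ f) := by
  unfold Op
  exact Measurable.lintegral_prod_right' (f := fun p : (ℝ × ℝ) × ℝ => f (step p.1 p.2)) (hf.comp hs)

lemma measurable_Op_iter {step : ℝ × ℝ → ℝ → ℝ × ℝ}
    (hs : Measurable (fun p : (ℝ × ℝ) × ℝ => step p.1 p.2))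
    (γ : Measure ℝ) [SFinite γ] (n : ℕ) {f : ℝ × ℝ → ENNReal} (hf : Measurable f) :
    Measurable ((Op step γ)^[n] f) := by
  induction n generalizing f with
  | zero => simpa
  | succ n ih => rw [Function.iterate_succ_apply]; exact ih (measurable_Op hs γ hf)

lemma Op_tilt {h : ℝ} (hh : 0 < h) (f : ℝ × ℝ → ENNReal)
    (hf0 : ∀ s : ℝ × ℝ, s.1 ≤ 0 → f s = 0) :
    Op (stepP h) (gaussianReal (-h/2) h.toNNReal) (fun s => ENNReal.ofReal (Real.exp s.2) * f s)
      = fun s => ENNReal.ofReal (Real.exp s.2) *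
        Op (stepM h) (gaussianReal (-h/2) h.toNNReal) f s := by
  funext s
  unfold Op
  by_cases hz : 0 < s.1
  · have hms : MeasurableSet {y : ℝ | h * s.1 * Real.exp (y / 2) < 1} :=
      measurableSet_lt (by fun_prop) (by fun_prop)
    have h1 := one_step hh hz (fun y => f (stepM h s y))
    have h2 : ∫⁻ y, f (stepM h s y) ∂(gaussianReal (-h/2) h.toNNReal)
        = ∫⁻ y in {y | h * s.1 * Real.exp (y / 2) < 1}, f (stepM h s y)
          ∂(gaussianReal (-h/2) h.toNNReal) := by
      rw [← lintegral_indicator hms]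
      refine lintegral_congr fun y => ?_
      by_cases hy : h * s.1 * Real.exp (y / 2) < 1
      · rw [indicator_of_mem (by exact hy)]
      · rw [indicator_of_notMem (by exact hy)]
        apply hf0
        unfold stepM
        simp [hy]
    rw [h2, ← h1, ← lintegral_const_mul']
    · refine lintegral_congr fun x => ?_
      rw [stepM_phiP hh s hz, ← mul_assoc]
      rw [← ENNReal.ofReal_mul (Real.exp_pos _).le, ← Real.exp_add]
      rfl
    · exact ENNReal.ofReal_ne_top
  · have hz' : s.1 ≤ 0 := not_lt.mp hz
    have h1 : ∀ x, f (stepP h s x) = 0 := fun x => hf0 _ (by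
      unfold stepP
      exact mul_nonpos_of_nonpos_of_nonneg hz' (Real.exp_pos _).le)
    have h2 : ∀ x, f (stepM h s x) = 0 := fun x => hf0 _ (by
      unfold stepM
      dsimp only
      split_ifs
      · exact mul_nonpos_of_nonpos_of_nonneg hz' (Real.exp_pos _).le
      · exact le_rfl)
    simp [h1, h2]

lemma Op_kill {h : ℝ} (γ : Measure ℝ) (f : ℝ × ℝ → ENNReal) 
    (hf0 : ∀ s : ℝ × ℝ, s.1 ≤ 0 → f s = 0) (s : ℝ × ℝ) (hz' : s.1 ≤ 0) :
    Op (stepM h) γ f s = 0 := by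
  have h2 : ∀ x, f (stepM h s x) = 0 := fun x => hf0 _ (by
      unfold stepM
      dsimp only
      split_ifs
      · exact mul_nonpos_of_nonpos_of_nonneg hz' (Real.exp_pos _).le
      · exact le_rfl)
  simp [Op, h2]

lemma Op_tilt_iter {h : ℝ} (hh : 0 < h) (n : ℕ) (f : ℝ × ℝ → ENNReal) (hf : Measurable f)
    (hf0 : ∀ s : ℝ × ℝ, s.1 ≤ 0 → f s = 0) :
    (Op (stepP h) (gaussianReal (-h/2) h.toNNReal))^[n]
        (fun s => ENNReal.ofReal (Real.exp s.2) * f s)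
      = fun s => ENNReal.ofReal (Real.exp s.2) *
        (Op (stepM h) (gaussianReal (-h/2) h.toNNReal))^[n] f s := by
  induction n generalizing f with
  | zero => rfl
  | succ n ih =>
    rw [Function.iterate_succ_apply, Function.iterate_succ_apply, Op_tilt hh f hf0,
      ih _ (measurable_Op (measurable_stepM h) _ hf) (Op_kill _ f hf0)]

/-- state process driven by a sequence of increments -/
def St (step : ℝ × ℝ → ℝ → ℝ × ℝ) (s0 : ℝ × ℝ) (X : ℕ → ℝ) : ℕ → ℝ × ℝ
  | 0 => s0
  | k + 1 => step (St step s0 X k) (X k)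

lemma St_factor {step : ℝ × ℝ → ℝ → ℝ × ℝ}
    (hs : Measurable (fun p : (ℝ × ℝ) × ℝ => step p.1 p.2)) (s0 : ℝ × ℝ) (k : ℕ) :
    ∃ g : ((Finset.range k) → ℝ) → ℝ × ℝ, Measurable g ∧
      ∀ X : ℕ → ℝ, St step s0 X k = g (fun i => X i) := by
  induction k with
  | zero => exact ⟨fun _ => s0, measurable_const, fun X => rfl⟩
  | succ k ih =>
    obtain ⟨g, hg, hgX⟩ := ih
    refine ⟨fun y => step (g fun i => y ⟨i, Finset.mem_range.2
      ((Finset.mem_range.1 i.2).trans (Nat.lt_succ_self k))⟩) (y ⟨k, Finset.self_mem_range_succ k⟩), ?_, ?_⟩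
    · refine hs.comp (Measurable.prodMk (hg.comp ?_) (measurable_pi_apply _))
      exact measurable_pi_lambda _ fun i => measurable_pi_apply _
    · intro X
      simp only [St, hgX X]

lemma measurable_St {Ω : Type*} [MeasurableSpace Ω] {step : ℝ × ℝ → ℝ → ℝ × ℝ}
    (hs : Measurable (fun p : (ℝ × ℝ) × ℝ => step p.1 p.2)) (s0 : ℝ × ℝ)
    {X : ℕ → Ω → ℝ} (hX : ∀ i, Measurable (X i)) (k : ℕ) :
    Measurable (fun ω => St step s0 (fun i => X i ω) k) := by
  obtain ⟨g, hg, hgX⟩ := St_factor hs s0 k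
  simp only [hgX]
  exact hg.comp (measurable_pi_lambda _ fun i => hX _)

lemma lintegral_St {Ω : Type*} [MeasurableSpace Ω] {P : Measure Ω} [IsProbabilityMeasure P]
    {step : ℝ × ℝ → ℝ → ℝ × ℝ}
    (hs : Measurable (fun p : (ℝ × ℝ) × ℝ => step p.1 p.2)) (s0 : ℝ × ℝ)
    {X : ℕ → Ω → ℝ} (hX : ∀ i, Measurable (X i)) (hind : iIndepFun X P) (γ : Measure ℝ)
    [IsProbabilityMeasure γ]
    (hlaw : ∀ i, P.map (X i) = γ) (n : ℕ) (f : ℝ × ℝ → ENNReal) (hf : Measurable f) :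
    ∫⁻ ω, f (St step s0 (fun i => X i ω) n) ∂P = (Op step γ)^[n] f s0 := by
  induction n generalizing f with
  | zero => simp [St]
  | succ n ih =>
    rw [Function.iterate_succ_apply, ← ih _ (measurable_Op hs γ hf)]
    have hSm := measurable_St hs s0 hX n
    have hfs : Measurable (fun p : (ℝ × ℝ) × ℝ => f (step p.1 p.2)) := hf.comp hs
    have hI : IndepFun (fun ω => St step s0 (fun i => X i ω) n) (X n) P := by
      obtain ⟨g, hg, hgX⟩ := St_factor hs s0 n
      have h1 := hind.indepFun_finset (Finset.range n) {n} (by simp) hX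
      have hψ : Measurable (fun y : (({n} : Finset ℕ) → ℝ) => y ⟨n, by simp⟩) :=
        measurable_pi_apply _
      have h2 := h1.comp hg hψ
      simp only [hgX]
      exact h2
    have hmap := (indepFun_iff_map_prod_eq_prod_map_map hSm.aemeasurable (hX n).aemeasurable).1 hI
    have e1 : ∫⁻ ω, f (St step s0 (fun i => X i ω) (n+1)) ∂P
        = ∫⁻ p, f (step p.1 p.2) ∂(P.map (fun ω => (St step s0 (fun i => X i ω) n, X n ω))) := by
      rw [lintegral_map hfs (hSm.prodMk (hX n))]
      rfl
    rw [e1, hmap, hlaw, lintegral_prod _ hfs.aemeasurable,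
      lintegral_map (measurable_Op hs γ hf) hSm |>.symm]
    rfl

/-- The discrete identity. -/
lemma discrete_identity {Ω : Type*} [MeasurableSpace Ω] {P : Measure Ω} [IsProbabilityMeasure P]
    {X : ℕ → Ω → ℝ} (hX : ∀ i, Measurable (X i)) (hind : iIndepFun X P) {h : ℝ} (hh : 0 < h)
    (hlaw : ∀ i, P.map (X i) = gaussianReal (-h/2) h.toNNReal) (n : ℕ) (z : ℝ)
    (f : ℝ × ℝ → ENNReal) (hf : Measurable f)
    (hf0 : ∀ s : ℝ × ℝ, s.1 ≤ 0 → f s = 0) :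
    ∫⁻ ω, ENNReal.ofReal (Real.exp (St (stepP h) (z, 0) (fun i => X i ω) n).2) *
        f (St (stepP h) (z, 0) (fun i => X i ω) n) ∂P
      = ∫⁻ ω, f (St (stepM h) (z, 0) (fun i => X i ω) n) ∂P := by
  have h1 := lintegral_St (P := P) (measurable_stepP h) (z, 0) hX hind _ hlaw n
    (fun s => ENNReal.ofReal (Real.exp s.2) * f s) (by fun_prop)
  rw [h1, lintegral_St (P := P) (measurable_stepM h) (z, 0) hX hind _ hlaw n f hf,
    Op_tilt_iter hh n f hf hf0]
  simp

lemma sinh_sub_abs {y : ℝ} (hy : |y| ≤ 1) : |Real.sinh y - y| ≤ |y| ^ 3 := by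
  have h1 := Real.exp_bound (x := y) hy (n := 3) (by norm_num)
  have h2 := Real.exp_bound (x := -y) (by simpa using hy) (n := 3) (by norm_num)
  simp only [Finset.sum_range_succ, Finset.sum_range_zero, abs_neg] at h1 h2
  norm_num [Nat.factorial] at h1 h2
  rw [Real.sinh_eq]
  have h3 : (Real.exp y - Real.exp (-y)) / 2 - y
      = (Real.exp y - (1 + y + y ^ 2 / 2)) / 2 - (Real.exp (-y) - (1 + -y + y ^ 2 / 2)) / 2 := by ring
  rw [h3]
  have h4 := abs_sub ((Real.exp y - (1 + y + y ^ 2 / 2)) / 2) ((Real.exp (-y) - (1 + -y + y ^ 2 / 2)) / 2)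
  refine h4.trans ?_
  rw [abs_div, abs_div]
  norm_num
  have : 0 ≤ |y| ^ 3 := by positivity
  linarith

lemma step_r {h z r δ K : ℝ} (hh : 0 < h) (hz : 0 < z) (hzK : z ≤ K) (hzK' : z * Real.exp δ ≤ K)
    (hr : 2 * Real.sinh (r / 2) = h * z * Real.exp (δ / 2)) :
    0 ≤ r ∧ 2 * Real.sinh (r / 2) ≤ h * K ∧ r ≤ h * K := by
  have h0 : 0 < Real.sinh (r / 2) := by
    have : 0 < h * z * Real.exp (δ / 2) := by positivity
    linarith
  have hr0 : 0 < r / 2 := Real.sinh_pos_iff.1 h0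
  have hK : 0 < K := hz.trans_le hzK
  have h1 : z * Real.exp (δ / 2) ≤ K := by
    have e : (z * Real.exp (δ / 2)) ^ 2 = z * (z * Real.exp δ) := by
      rw [mul_pow, ← Real.exp_nat_mul]; push_cast
      rw [show (2:ℝ) * (δ / 2) = δ by ring]; ring
    have e2 : z * (z * Real.exp δ) ≤ K * K := by gcongr
    have e3 : 0 < z * Real.exp (δ / 2) := by positivity
    nlinarith
  have h2 : 2 * Real.sinh (r / 2) ≤ h * K := by
    rw [hr, mul_assoc]; gcongr
  have h3 : r / 2 ≤ Real.sinh (r / 2) := Real.self_le_sinh_iff.2 hr0.le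
  exact ⟨by linarith, h2, by linarith⟩

lemma step_err {h z r δ K : ℝ} (hh : 0 < h) (hz : 0 < z) (hzK : z ≤ K) (hzK' : z * Real.exp δ ≤ K)
    (hr : 2 * Real.sinh (r / 2) = h * z * Real.exp (δ / 2)) (hhK : h * K ≤ 1) (hδ : |δ| ≤ 1) :
    |2 * r * δ / h - 2 * (z * Real.exp δ - z)| ≤ 2 * (K ^ 3 * h ^ 2 + K * |δ| ^ 3) := by
  obtain ⟨r0, hp, hrK⟩ := step_r hh hz hzK hzK' hr
  have hK : 0 < K := hz.trans_le hzK
  set p := 2 * Real.sinh (r / 2) with hpdef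
  set q := 2 * Real.sinh (δ / 2) with hqdef
  have hpq : h * (z * Real.exp δ - z) = p * q := by
    rw [hr, hqdef, Real.sinh_eq]
    have e1 : Real.exp (δ / 2) * Real.exp (δ / 2) = Real.exp δ := by
      rw [← Real.exp_add]; congr 1; ring
    have e2 : Real.exp (δ / 2) * Real.exp (-(δ / 2)) = 1 := by
      rw [← Real.exp_add]; simp
    linear_combination (-h * z) * e1 + h * z * e2
  have h1 : |r - p| ≤ (h * K) ^ 3 := by
    have := sinh_sub_abs (y := r / 2) (by rw [abs_of_nonneg (by linarith)]; linarith)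
    rw [abs_of_nonneg (by linarith : 0 ≤ r / 2)] at this
    have e : |r - p| = 2 * |Real.sinh (r/2) - r/2| := by
      rw [← abs_two, ← abs_mul, abs_two, abs_sub_comm]; congr 1; rw [hpdef]; ring
    rw [e]
    have e2 : r ^ 3 ≤ (h * K) ^ 3 := by gcongr
    have e3 : 0 ≤ r ^ 3 := by positivity
    nlinarith
  have h2 : |δ - q| ≤ |δ| ^ 3 := by
    have := sinh_sub_abs (y := δ / 2) (by rw [abs_div, abs_two]; linarith)
    rw [abs_div, abs_two] at this
    have e : |δ - q| = 2 * |Real.sinh (δ/2) - δ/2| := by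
      rw [← abs_two, ← abs_mul, abs_two, abs_sub_comm]; congr 1; rw [hqdef]; ring
    rw [e]
    have e3 : 0 ≤ |δ| ^ 3 := by positivity
    nlinarith
  have hp0 : 0 ≤ p := by rw [hr]; positivity
  have h3 : |r * δ - p * q| ≤ (h * K) ^ 3 + h * K * |δ| ^ 3 := by
    have e : r * δ - p * q = (r - p) * δ + p * (δ - q) := by ring
    rw [e]
    refine (abs_add_le _ _).trans ?_
    rw [abs_mul, abs_mul, abs_of_nonneg hp0]
    have e1 : |r - p| * |δ| ≤ (h * K) ^ 3 * 1 := by gcongr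
    have e2 : p * |δ - q| ≤ h * K * |δ| ^ 3 := by gcongr
    linarith
  have h4 : 2 * r * δ / h - 2 * (z * Real.exp δ - z) = 2 / h * (r * δ - p * q) := by
    rw [← hpq]; field_simp
  rw [h4, abs_mul, abs_of_pos (by positivity)]
  calc 2 / h * |r * δ - p * q| ≤ 2 / h * ((h * K) ^ 3 + h * K * |δ| ^ 3) := by gcongr
    _ = _ := by field_simp

lemma cube_bound {x y : ℝ} (hx : 0 ≤ x) (hy : 0 ≤ y) : (x + y) ^ 3 ≤ 4 * x ^ 3 + 4 * y ^ 3 := by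
  nlinarith [mul_nonneg (add_nonneg hx hy) (sq_nonneg (x - y))]

/-- accumulated error estimate -/
lemma conv_err {h K : ℝ} (hh : 0 < h) (n : ℕ) (z r δ L w : ℕ → ℝ)
    (hz : ∀ k ≤ n, 0 < z k ∧ z k ≤ K) (hstep : ∀ k < n, z (k+1) = z k * Real.exp (δ k))
    (hr : ∀ k < n, 2 * Real.sinh (r k / 2) = h * z k * Real.exp (δ k / 2))
    (hL0 : L 0 = 0) (hL : ∀ k < n, L (k+1) = L k + 2 * r k * δ k / h)
    (hδ : ∀ k < n, |δ k| ≤ |w k| + h / 2 + |r k|) (hhK : h * K ≤ 1/4) (hh4 : h ≤ 1/4)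
    (hw : ∀ k < n, |w k| ≤ 1/4) :
    |L n - 2 * (z n - z 0)| ≤ 
      (2 * K ^ 3 + 8 * K + 8 * K * (1 + K) ^ 3) * (∑ k ∈ Finset.range n, |w k| ^ 3 + n * h ^ 2) := by
  have hK : 0 < K := (hz 0 (Nat.zero_le _)).1.trans_le (hz 0 (Nat.zero_le _)).2
  set C := 2 * K ^ 3 + 8 * K + 8 * K * (1 + K) ^ 3 with hC
  have key : ∀ k ≤ n, |L k - 2 * (z k - z 0)| ≤
      C * (∑ k ∈ Finset.range k, |w k| ^ 3 + k * h ^ 2) := by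
    intro k
    induction k with
    | zero => intro _; simp [hL0]
    | succ k ih =>
      intro hk
      have hk' : k < n := hk
      have hzk := hz k hk'.le
      have hzk1 := hz (k+1) hk
      rw [hstep k hk'] at hzk1
      obtain ⟨r0, -, hrK⟩ := step_r hh hzk.1 hzk.2 hzk1.2 (hr k hk')
      have hd := hδ k hk'
      rw [abs_of_nonneg r0] at hd
      have hwk := hw k hk'
      have hd1 : |δ k| ≤ 1 := by linarith
      have he := step_err hh hzk.1 hzk.2 hzk1.2 (hr k hk') (by linarith) hd1
      have hd3 : |δ k| ^ 3 ≤ 4 * |w k| ^ 3 + 4 * (h * (1 + K)) ^ 3 := by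
        refine le_trans ?_ (cube_bound (abs_nonneg _) (by positivity))
        gcongr
        nlinarith
      have hh3 : h ^ 3 ≤ h ^ 2 := by nlinarith [sq_nonneg h]
      have hw3 : 0 ≤ |w k| ^ 3 := by positivity
      have hstep2 : 2 * (K ^ 3 * h ^ 2 + K * |δ k| ^ 3) ≤ C * (|w k| ^ 3 + h ^ 2) := by
        have e1 : K * |δ k| ^ 3 ≤ K * (4 * |w k| ^ 3 + 4 * (h * (1 + K)) ^ 3) := by gcongr
        have e2 : K * (1+K)^3 * h ^ 3 ≤ K * (1+K)^3 * h ^ 2 := by gcongr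
        have e3 : 0 ≤ K ^ 3 * |w k| ^ 3 := by positivity
        have e4 : 0 ≤ K * (1+K) ^ 3 * |w k| ^ 3 := by positivity
        have e5 : 0 ≤ K * h ^ 2 := by positivity
        rw [hC]
        nlinarith
      have e : L (k+1) - 2 * (z (k+1) - z 0) = (L k - 2 * (z k - z 0)) +
          (2 * r k * δ k / h - 2 * (z k * Real.exp (δ k) - z k)) := by
        rw [hL k hk', hstep k hk']; ring
      rw [e, Finset.sum_range_succ]
      refine (abs_add_le _ _).trans ?_
      have := ih hk'.le
      push_cast
      linarith
  exact key n le_rfl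

/-- discretised time integral -/
def Ad (h : ℝ) (b : ℕ → ℝ) (k : ℕ) : ℝ :=
  ∑ j ∈ Finset.range k, h * Real.exp ((b j + b (j+1)) / 2)

lemma Ad_succ (h : ℝ) (b : ℕ → ℝ) (k : ℕ) :
    Ad h b (k+1) = Ad h b k + h * Real.exp ((b k + b (k+1)) / 2) := by
  unfold Ad; rw [Finset.sum_range_succ]

lemma Ad_mono {h : ℝ} (hh : 0 < h) (b : ℕ → ℝ) : Monotone (Ad h b) := by
  refine monotone_nat_of_le_succ fun k => ?_
  rw [Ad_succ]
  have : 0 < h * Real.exp ((b k + b (k+1)) / 2) := by positivity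
  linarith

lemma Ad_nonneg {h : ℝ} (hh : 0 < h) (b : ℕ → ℝ) (k : ℕ) : 0 ≤ Ad h b k := by
  unfold Ad; positivity

lemma exp_incr (b : ℕ → ℝ) (k : ℕ) :
    Real.exp (b k) * Real.exp ((b (k+1) - b k) / 2) = Real.exp ((b k + b (k+1)) / 2) := by
  rw [← Real.exp_add]; congr 1; ring

lemma StP_fst {h a : ℝ} (hh : 0 < h) (ha : 0 < a) (b : ℕ → ℝ) (hb : b 0 = 0) (k : ℕ) :
    (St (stepP h) (1 / a, 0) (fun i => b (i+1) - b i) k).1 = Real.exp (b k) / (a + Ad h b k) := by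
  induction k with
  | zero => simp [St, Ad, hb]
  | succ k ih =>
    have hA := Ad_nonneg hh b k
    have hA1 := Ad_nonneg hh b (k+1)
    have hz : 0 < Real.exp (b k) / (a + Ad h b k) := by positivity
    simp only [St, stepP]
    rw [ih, Real.exp_sub, exp_rP hh hz, Real.exp_sub]
    have e1 : 1 + h * (Real.exp (b k) / (a + Ad h b k)) * Real.exp ((b (k+1) - b k) / 2)
        = (a + Ad h b (k+1)) / (a + Ad h b k) := by
      rw [Ad_succ, ← exp_incr]; field_simp; ring
    rw [e1]
    field_simp

lemma StM_fst {h a : ℝ} (hh : 0 < h) (b : ℕ → ℝ) (hb : b 0 = 0) (k : ℕ)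
    (hk : Ad h b k < a) :
    (St (stepM h) (1 / a, 0) (fun i => b (i+1) - b i) k).1 = Real.exp (b k) / (a - Ad h b k) := by
  induction k with
  | zero => simp [St, Ad, hb]
  | succ k ih =>
    have hk' : Ad h b k < a := lt_of_le_of_lt (Ad_mono hh b (Nat.le_succ k)) hk
    have ih := ih hk'
    have hd : 0 < a - Ad h b k := by linarith
    have hd1 : 0 < a - Ad h b (k+1) := by linarith
    have e1 : 1 - h * (Real.exp (b k) / (a - Ad h b k)) * Real.exp ((b (k+1) - b k) / 2)
        = (a - Ad h b (k+1)) / (a - Ad h b k) := by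
      rw [Ad_succ, ← exp_incr]; field_simp; ring
    have hal : h * (Real.exp (b k) / (a - Ad h b k)) * Real.exp ((b (k+1) - b k) / 2) < 1 := by
      have : 0 < (a - Ad h b (k+1)) / (a - Ad h b k) := by positivity
      linarith
    simp only [St, stepM]
    rw [ih, if_pos hal, ← sub_neg_eq_add, Real.exp_sub, exp_neg_rM hal, Real.exp_sub, e1]
    field_simp

lemma StM_fst_nonpos {h a : ℝ} (hh : 0 < h) (ha : 0 < a) (b : ℕ → ℝ) (hb : b 0 = 0) (k : ℕ)
    (hk : a ≤ Ad h b k) :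
    (St (stepM h) (1 / a, 0) (fun i => b (i+1) - b i) k).1 ≤ 0 := by
  induction k with
  | zero => simp [Ad] at hk; linarith
  | succ k ih =>
    by_cases hk' : Ad h b k < a
    · have e := StM_fst hh b hb k hk'
      have hd : 0 < a - Ad h b k := by linarith
      have hal : ¬ h * (Real.exp (b k) / (a - Ad h b k)) * Real.exp ((b (k+1) - b k) / 2) < 1 := by
        have e1 : 1 - h * (Real.exp (b k) / (a - Ad h b k)) * Real.exp ((b (k+1) - b k) / 2)
          = (a - Ad h b (k+1)) / (a - Ad h b k) := by
          rw [Ad_succ, ← exp_incr]; field_simp; ring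
        have : (a - Ad h b (k+1)) / (a - Ad h b k) ≤ 0 :=
          div_nonpos_of_nonpos_of_nonneg (by linarith) hd.le
        linarith
      simp only [St, stepM]
      rw [e, if_neg hal]
    · have ih := ih (not_lt.1 hk')
      simp only [St, stepM]
      split_ifs
      · exact mul_nonpos_of_nonpos_of_nonneg ih (Real.exp_pos _).le
      · exact le_rfl

lemma rP_sinh {h z : ℝ} (hh : 0 < h) (hz : 0 < z) (x : ℝ) :
    2 * Real.sinh (rP h z x / 2) = h * z * Real.exp ((x - rP h z x) / 2) := by
  have e := exp_rP hh hz x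
  rw [Real.sinh_eq]
  have e1 : Real.exp (rP h z x / 2) = Real.exp (rP h z x) * Real.exp (- (rP h z x / 2)) := by
    rw [← Real.exp_add]; congr 1; ring
  have e2 : Real.exp ((x - rP h z x) / 2) = Real.exp (x / 2) * Real.exp (- (rP h z x / 2)) := by
    rw [← Real.exp_add]; congr 1; ring
  rw [e1, e2, e]; ring

lemma rM_sinh {h z x : ℝ} (hx : h * z * Real.exp (x / 2) < 1) :
    2 * Real.sinh (rM h z x / 2) = h * z * Real.exp ((x + rM h z x) / 2) := by
  have e := exp_neg_rM hx
  rw [Real.sinh_eq]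
  have e1 : Real.exp (-(rM h z x / 2)) = Real.exp (-rM h z x) * Real.exp (rM h z x / 2) := by
    rw [← Real.exp_add]; congr 1; ring
  have e2 : Real.exp ((x + rM h z x) / 2) = Real.exp (x / 2) * Real.exp (rM h z x / 2) := by
    rw [← Real.exp_add]; congr 1; ring
  rw [e1, e2, e]; ring

lemma errP {h a K : ℝ} (hh : 0 < h) (ha : 0 < a) (b w : ℕ → ℝ) (hb : b 0 = 0) (n : ℕ)
    (hw : ∀ k < n, b (k+1) - b k = w k - h / 2)
    (hK : ∀ k ≤ n, Real.exp (b k) / (a + Ad h b k) ≤ K)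
    (hhK : h * K ≤ 1/4) (hh4 : h ≤ 1/4) (hw4 : ∀ k < n, |w k| ≤ 1/4) :
    |(St (stepP h) (1 / a, 0) (fun i => b (i+1) - b i) n).2
        - 2 * (Real.exp (b n) / (a + Ad h b n) - 1 / a)| ≤
      (2 * K ^ 3 + 8 * K + 8 * K * (1 + K) ^ 3) *
        (∑ k ∈ Finset.range n, |w k| ^ 3 + n * h ^ 2) := by
  set X : ℕ → ℝ := fun i => b (i+1) - b i with hX
  have hz1 := StP_fst hh ha b hb
  have hpos : ∀ k, 0 < (St (stepP h) (1 / a, 0) X k).1 := fun k => by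
    have := Ad_nonneg hh b k
    rw [hz1]; positivity
  have := conv_err hh n (fun k => (St (stepP h) (1 / a, 0) X k).1)
    (fun k => rP h (St (stepP h) (1 / a, 0) X k).1 (X k))
    (fun k => X k - rP h (St (stepP h) (1 / a, 0) X k).1 (X k))
    (fun k => (St (stepP h) (1 / a, 0) X k).2) w (K := K)
    (fun k hk => ⟨hpos k, by rw [hz1]; exact hK k hk⟩)
    (fun k _ => rfl) (fun k _ => rP_sinh hh (hpos k) _) rfl (fun k _ => rfl)
    (fun k hk => by
      rw [hX]; dsimp only; rw [hw k hk]
      refine (abs_sub _ _).trans ?_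
      gcongr
      refine (abs_sub _ _).trans ?_
      rw [abs_of_pos (by positivity : 0 < h / 2)]) hhK hh4 hw4
  rw [hz1] at this
  simpa [St] using this

lemma errM {h a K : ℝ} (hh : 0 < h) (b w : ℕ → ℝ) (hb : b 0 = 0) (n : ℕ)
    (hn : Ad h b n < a)
    (hw : ∀ k < n, b (k+1) - b k = w k - h / 2)
    (hK : ∀ k ≤ n, Real.exp (b k) / (a - Ad h b k) ≤ K)
    (hhK : h * K ≤ 1/4) (hh4 : h ≤ 1/4) (hw4 : ∀ k < n, |w k| ≤ 1/4) :
    |(St (stepM h) (1 / a, 0) (fun i => b (i+1) - b i) n).2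
        - 2 * (Real.exp (b n) / (a - Ad h b n) - 1 / a)| ≤
      (2 * K ^ 3 + 8 * K + 8 * K * (1 + K) ^ 3) *
        (∑ k ∈ Finset.range n, |w k| ^ 3 + n * h ^ 2) := by
  set X : ℕ → ℝ := fun i => b (i+1) - b i with hX
  have hlt : ∀ k ≤ n, Ad h b k < a := fun k hk => lt_of_le_of_lt (Ad_mono hh b hk) hn
  have hz1 : ∀ k ≤ n, (St (stepM h) (1 / a, 0) X k).1 = Real.exp (b k) / (a - Ad h b k) :=
    fun k hk => StM_fst hh b hb k (hlt k hk)
  have hpos : ∀ k ≤ n, 0 < (St (stepM h) (1 / a, 0) X k).1 := fun k hk => by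
    have : 0 < a - Ad h b k := by linarith [hlt k hk]
    rw [hz1 k hk]; positivity
  have hal : ∀ k < n, h * (St (stepM h) (1 / a, 0) X k).1 * Real.exp (X k / 2) < 1 := by
    intro k hk
    by_contra hc
    have h1 := hpos (k+1) hk
    simp only [St, stepM] at h1
    rw [if_neg hc] at h1
    exact lt_irrefl _ h1
  have := conv_err hh n (fun k => (St (stepM h) (1 / a, 0) X k).1)
    (fun k => rM h (St (stepM h) (1 / a, 0) X k).1 (X k))
    (fun k => X k + rM h (St (stepM h) (1 / a, 0) X k).1 (X k))
    (fun k => (St (stepM h) (1 / a, 0) X k).2) w (K := K)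
    (fun k hk => ⟨hpos k hk, by rw [hz1 k hk]; exact hK k hk⟩)
    (fun k hk => by
      simp only [St, stepM]
      rw [if_pos (hal k hk)]) (fun k hk => rM_sinh (hal k hk)) rfl (fun k _ => rfl)
    (fun k hk => by
      rw [hX]; dsimp only; rw [hw k hk]
      refine (abs_add_le _ _).trans ?_
      gcongr
      refine (abs_sub _ _).trans ?_
      rw [abs_of_pos (by positivity : 0 < h / 2)]) hhK hh4 hw4
  rw [hz1 n le_rfl] at this
  simpa [St] using this

open Filter Topology

lemma riemann_tendsto {t : ℝ} (ht : 0 < t) {β : ℝ → ℝ} (hβ : Continuous β) :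
    Tendsto (fun n : ℕ => Ad (t / n) (fun k => β (k * (t / n))) n) atTop
      (𝓝 (∫ s in (0:ℝ)..t, Real.exp (β s))) := by
  have hψ : Continuous (fun s => Real.exp (β s)) := Real.continuous_exp.comp hβ
  have huc := isCompact_Icc (a := (0:ℝ)) (b := t) |>.uniformContinuousOn_of_continuous hψ.continuousOn
  rw [Metric.tendsto_atTop]
  intro ε hε
  rw [Metric.uniformContinuousOn_iff] at huc
  obtain ⟨η, hη, hu⟩ := huc (ε / (2 * t)) (by positivity)
  obtain ⟨n0, hn0⟩ := exists_nat_gt (t / η)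
  refine ⟨n0 + 1, fun n hn => ?_⟩
  have hnpos : (0:ℝ) < n := by
    have : 0 < n := by omega
    exact_mod_cast this
  have hnη : t / n < η := by
    have : (n0:ℝ) < n := by exact_mod_cast hn
    rw [div_lt_iff₀ hη] at hn0
    rw [div_lt_iff₀ hnpos]
    nlinarith
  set h := t / n with hh
  have hhpos : 0 < h := by positivity
  have hnh : (n:ℝ) * h = t := by rw [hh]; field_simp
  have hsum : ∫ s in (0:ℝ)..t, Real.exp (β s)
      = ∑ k ∈ Finset.range n, ∫ s in (k * h)..((k+1 : ℕ) * h), Real.exp (β s) := by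
    rw [intervalIntegral.sum_integral_adjacent_intervals (a := fun k : ℕ => (k:ℝ) * h)]
    · simp [hnh]
    · intro k _; exact hψ.intervalIntegrable _ _
  have hterm : ∀ k ∈ Finset.range n, |h * Real.exp ((β (k * h) + β ((k+1 : ℕ) * h)) / 2)
      - ∫ s in (k * h)..((k+1 : ℕ) * h), Real.exp (β s)| ≤ ε / (2 * t) * h := by
    intro k hk
    have hk' : ((k + 1 : ℕ):ℝ) ≤ n := by exact_mod_cast Finset.mem_range.1 hk
    have hlen : ((k+1 : ℕ):ℝ) * h - k * h = h := by push_cast; ring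
    have hk1 : ((k + 1 : ℕ):ℝ) * h ≤ t := by rw [← hnh]; gcongr
    have hk0 : 0 ≤ (k:ℝ) * h := by positivity
    have e : h * Real.exp ((β (k * h) + β ((k+1 : ℕ) * h)) / 2)
        = ∫ s in (k * h)..((k+1 : ℕ) * h), Real.exp ((β (k * h) + β ((k+1 : ℕ) * h)) / 2) := by
      rw [intervalIntegral.integral_const, hlen, smul_eq_mul]
    rw [e, ← intervalIntegral.integral_sub (by simp) (hψ.intervalIntegrable _ _)]
    have := intervalIntegral.norm_integral_le_of_norm_le_const (a := (k:ℝ) * h)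
      (b := ((k+1 : ℕ):ℝ) * h) (C := ε / (2*t))
      (f := fun s => Real.exp ((β (k * h) + β ((k+1 : ℕ) * h)) / 2) - Real.exp (β s)) ?_
    · rw [hlen, abs_of_pos hhpos] at this
      exact this
    · intro s hs
      rw [uIoc_of_le (by linarith)] at hs
      have hsI : s ∈ Icc 0 t := ⟨by linarith [hs.1], by linarith [hs.2]⟩
      have h1 := hu (k*h) ⟨hk0, by linarith⟩ s hsI (by
        rw [Real.dist_eq, abs_lt]; constructor <;> linarith [hs.1, hs.2])
      have h2 := hu (((k+1 : ℕ):ℝ)*h) ⟨by linarith, hk1⟩ s hsI (by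
        rw [Real.dist_eq, abs_lt]; constructor <;> linarith [hs.1, hs.2])
      rw [Real.dist_eq, abs_lt] at h1 h2
      rw [Real.norm_eq_abs, abs_le]
      rcases le_total (β (k * h)) (β ((k+1 : ℕ) * h)) with hle | hle
      · have m1 : Real.exp (β (k*h)) ≤ Real.exp ((β (k * h) + β ((k+1 : ℕ) * h)) / 2) :=
          Real.exp_le_exp.2 (by linarith)
        have m2 : Real.exp ((β (k * h) + β ((k+1 : ℕ) * h)) / 2) ≤ Real.exp (β ((k+1 : ℕ) * h)) :=
          Real.exp_le_exp.2 (by linarith)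
        constructor <;> linarith [h1.1, h1.2, h2.1, h2.2]
      · have m1 : Real.exp (β ((k+1 : ℕ)*h)) ≤ Real.exp ((β (k * h) + β ((k+1 : ℕ) * h)) / 2) :=
          Real.exp_le_exp.2 (by linarith)
        have m2 : Real.exp ((β (k * h) + β ((k+1 : ℕ) * h)) / 2) ≤ Real.exp (β (k * h)) :=
          Real.exp_le_exp.2 (by linarith)
        constructor <;> linarith [h1.1, h1.2, h2.1, h2.2]
  rw [Real.dist_eq, hsum]
  unfold Ad
  rw [← Finset.sum_sub_distrib]
  refine lt_of_le_of_lt ((Finset.abs_sum_le_sum_abs _ _).trans (Finset.sum_le_sum hterm)) ?_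
  rw [Finset.sum_const, Finset.card_range, nsmul_eq_mul]
  have : (n:ℝ) * (ε / (2 * t) * h) = ε / 2 := by
    rw [mul_left_comm, hnh]; field_simp
  rw [this]; linarith

/-- common bookkeeping for the limits -/
lemma tendsto_of_err {t : ℝ} (ht : 0 < t) (l : Filter ℕ) (hl : l ≤ atTop)
    (L ζ : ℕ → ℝ) (V : ℕ → ℝ) (hV : Tendsto V l (𝓝 0)) (C c : ℝ)
    (hζ : Tendsto ζ l (𝓝 c))
    (herr : ∀ᶠ n in l, |L n - ζ n| ≤ C * (V n + n * (t / n) ^ 2)) :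
    Tendsto L l (𝓝 c) := by
  have h1 : Tendsto (fun n : ℕ => (n:ℝ) * (t / n) ^ 2) l (𝓝 0) := by
    have h2 : Tendsto (fun n : ℕ => t ^ 2 / (n:ℝ)) l (𝓝 0) :=
      (tendsto_const_div_atTop_nhds_zero_nat (t ^ 2)).mono_left hl
    refine h2.congr' ?_
    filter_upwards [hl (eventually_gt_atTop 0)] with n hn
    have : (0:ℝ) < n := by exact_mod_cast hn
    field_simp
  have h3 : Tendsto (fun n : ℕ => C * (V n + n * (t / n) ^ 2)) l (𝓝 0) := by
    simpa using (hV.add h1).const_mul C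
  have h4 : Tendsto (fun n => L n - ζ n) l (𝓝 0) :=
    squeeze_zero_norm' (by simpa [Real.norm_eq_abs] using herr) h3
  simpa using h4.add hζ

/-- sampled path -/
def smp (β : ℝ → ℝ) (t : ℝ) (n : ℕ) : ℕ → ℝ := fun k => β (k * (t / n))

lemma small_w {t : ℝ} (β : ℝ → ℝ) (l : Filter ℕ) 
    (hV : Tendsto (fun n => ∑ k ∈ Finset.range n,
      |smp β t n (k+1) - smp β t n k + t / n / 2| ^ 3) l (𝓝 0)) :
    ∀ᶠ n in l, ∀ k < n, |smp β t n (k+1) - smp β t n k + t / n / 2| ≤ 1/4 := by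
  filter_upwards [hV.eventually_lt_const (show (0:ℝ) < (1/4)^3 by norm_num)] with n hn k hk
  have h1 : |smp β t n (k+1) - smp β t n k + t / n / 2| ^ 3 ≤ _ :=
    Finset.single_le_sum (f := fun k => |smp β t n (k+1) - smp β t n k + t / n / 2| ^ 3)
      (fun i _ => by positivity) (Finset.mem_range.2 hk)
  have h2 := h1.trans hn.le
  exact le_of_pow_le_pow_left₀ (by norm_num) (by norm_num) h2

lemma small_h (t K : ℝ) (l : Filter ℕ) (hl : l ≤ atTop) :
    ∀ᶠ n : ℕ in l, t / n * K ≤ 1/4 := by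
  have h2 : Tendsto (fun n : ℕ => t / (n:ℝ) * K) l (𝓝 (0 * K)) :=
      ((tendsto_const_div_atTop_nhds_zero_nat t).mono_left hl).mul_const K
  rw [zero_mul] at h2
  filter_upwards [h2.eventually_lt_const (show (0:ℝ) < 1/4 by norm_num)] with n hn
  exact hn.le

lemma bound_path {t : ℝ} (ht : 0 < t) {β : ℝ → ℝ} (hβ : Continuous β) :
    ∃ K : ℝ, 0 < K ∧ ∀ n : ℕ, 0 < n → ∀ k ≤ n, Real.exp (smp β t n k) ≤ K := by
  obtain ⟨K, hK⟩ := (isCompact_Icc (a := (0:ℝ)) (b := t)).bddAbove_image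
    (f := fun s => Real.exp (β s)) (Real.continuous_exp.comp hβ).continuousOn
  have hK' : ∀ s ∈ Icc 0 t, Real.exp (β s) ≤ K := fun s hs => hK (mem_image_of_mem _ hs)
  refine ⟨K, (Real.exp_pos _).trans_le (hK' 0 ⟨le_rfl, ht.le⟩), fun n hn k hk => hK' _ ⟨by positivity, ?_⟩⟩
  have hn' : (0:ℝ) < n := by exact_mod_cast hn
  have hk' : (k:ℝ) ≤ n := by exact_mod_cast hk
  calc (k:ℝ) * (t / n) ≤ n * (t / n) := by gcongr
    _ = t := by field_simp

lemma LP_tendsto {t a : ℝ} (ht : 0 < t) (ha : 0 < a) {β : ℝ → ℝ} (hβ : Continuous β) (hβ0 : β 0 = 0)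
    (l : Filter ℕ) (hl : l ≤ atTop)
    (hV : Tendsto (fun n => ∑ k ∈ Finset.range n,
      |smp β t n (k+1) - smp β t n k + t / n / 2| ^ 3) l (𝓝 0)) :
    Tendsto (fun n : ℕ => (St (stepP (t / n)) (1 / a, 0)
        (fun i => smp β t n (i+1) - smp β t n i) n).2) l
      (𝓝 (2 * (Real.exp (β t) / (a + ∫ s in (0:ℝ)..t, Real.exp (β s)) - 1 / a))) := by
  obtain ⟨K, hK0, hK⟩ := bound_path ht hβ
  have hA : Tendsto (fun n : ℕ => Ad (t/n) (smp β t n) n) l _ := (riemann_tendsto ht hβ).mono_left hl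
  have hApos : 0 ≤ ∫ s in (0:ℝ)..t, Real.exp (β s) :=
    intervalIntegral.integral_nonneg ht.le fun s _ => (Real.exp_pos _).le
  refine tendsto_of_err ht l hl _ (fun n : ℕ => 2 * (Real.exp (smp β t n n) / (a + Ad (t/n) (smp β t n) n) - 1 / a))
    _ hV (2 * (K/a) ^ 3 + 8 * (K/a) + 8 * (K/a) * (1 + K/a) ^ 3) _ ?_ ?_
  · have h1 : Tendsto (fun n : ℕ => 2 * (Real.exp (β t) / (a + Ad (t/n) (smp β t n) n) - 1 / a)) l
        (𝓝 (2 * (Real.exp (β t) / (a + ∫ s in (0:ℝ)..t, Real.exp (β s)) - 1 / a))) :=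
      ((tendsto_const_nhds.div (tendsto_const_nhds.add hA) (by positivity)).sub
        tendsto_const_nhds).const_mul 2
    refine h1.congr' ?_
    filter_upwards [hl (eventually_gt_atTop 0)] with n hn
    have : (0:ℝ) < n := by exact_mod_cast hn
    rw [show smp β t n n = β t by unfold smp; congr 1; field_simp]
  · filter_upwards [hl (eventually_gt_atTop 0), small_w β l hV, small_h t (K/a) l hl,
      small_h t 1 l hl] with n hn hw hhK hh4
    have hn' : (0:ℝ) < n := by exact_mod_cast hn
    have hh : 0 < t / n := by positivity
    refine errP hh ha (smp β t n) (fun k => smp β t n (k+1) - smp β t n k + t / n / 2)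
      (by simp [smp, hβ0]) n (fun k _ => by ring) (fun k hk => ?_) hhK (by simpa using hh4) hw
    have := Ad_nonneg hh (smp β t n) k
    have := hK n hn k hk
    gcongr
    linarith

lemma LM_tendsto {t a : ℝ} (ht : 0 < t) {β : ℝ → ℝ} (hβ : Continuous β) (hβ0 : β 0 = 0)
    (l : Filter ℕ) (hl : l ≤ atTop) (hAa : ∫ s in (0:ℝ)..t, Real.exp (β s) < a)
    (hV : Tendsto (fun n => ∑ k ∈ Finset.range n,
      |smp β t n (k+1) - smp β t n k + t / n / 2| ^ 3) l (𝓝 0)) :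
    Tendsto (fun n : ℕ => (St (stepM (t / n)) (1 / a, 0)
        (fun i => smp β t n (i+1) - smp β t n i) n).2) l
      (𝓝 (2 * (Real.exp (β t) / (a - ∫ s in (0:ℝ)..t, Real.exp (β s)) - 1 / a))) ∧
    ∀ᶠ n : ℕ in l, 0 < (St (stepM (t / n)) (1 / a, 0)
        (fun i => smp β t n (i+1) - smp β t n i) n).1 := by
  obtain ⟨K, hK0, hK⟩ := bound_path ht hβ
  have hA : Tendsto (fun n : ℕ => Ad (t/n) (smp β t n) n) l _ := (riemann_tendsto ht hβ).mono_left hl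
  set I := ∫ s in (0:ℝ)..t, Real.exp (β s) with hI
  set d := (a - I) / 2 with hd
  have hd0 : 0 < d := by rw [hd]; linarith
  have hev : ∀ᶠ n : ℕ in l, Ad (t/n) (smp β t n) n < a - d :=
    hA.eventually_lt_const (by rw [hd]; linarith)
  constructor
  · refine tendsto_of_err ht l hl _ (fun n : ℕ => 2 * (Real.exp (smp β t n n) / (a - Ad (t/n) (smp β t n) n) - 1 / a))
      _ hV (2 * (K/d) ^ 3 + 8 * (K/d) + 8 * (K/d) * (1 + K/d) ^ 3) _ ?_ ?_
    · have h1 : Tendsto (fun n : ℕ => 2 * (Real.exp (β t) / (a - Ad (t/n) (smp β t n) n) - 1 / a)) l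
          (𝓝 (2 * (Real.exp (β t) / (a - I) - 1 / a))) :=
        ((tendsto_const_nhds.div (tendsto_const_nhds.sub hA) (by linarith)).sub
          tendsto_const_nhds).const_mul 2
      refine h1.congr' ?_
      filter_upwards [hl (eventually_gt_atTop 0)] with n hn
      have : (0:ℝ) < n := by exact_mod_cast hn
      rw [show smp β t n n = β t by unfold smp; congr 1; field_simp]
    · filter_upwards [hl (eventually_gt_atTop 0), small_w β l hV, small_h t (K/d) l hl,
        small_h t 1 l hl, hev] with n hn hw hhK hh4 hAn
      have hn' : (0:ℝ) < n := by exact_mod_cast hn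
      have hh : 0 < t / n := by positivity
      refine errM hh (smp β t n) (fun k => smp β t n (k+1) - smp β t n k + t / n / 2)
        (by simp [smp, hβ0]) n (by linarith) (fun k _ => by ring) (fun k hk => ?_) hhK
        (by simpa using hh4) hw
      have := Ad_mono hh (smp β t n) hk
      have := hK n hn k hk
      gcongr
      linarith
  · filter_upwards [hl (eventually_gt_atTop 0), hev] with n hn hAn
    have hn' : (0:ℝ) < n := by exact_mod_cast hn
    have hh : 0 < t / n := by positivity
    rw [StM_fst hh (smp β t n) (by simp [smp, hβ0]) n (by linarith)]
    have : 0 < a - Ad (t/n) (smp β t n) n := by linarith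
    positivity

lemma LM_dead {t a : ℝ} (ht : 0 < t) (ha : 0 < a) {β : ℝ → ℝ} (hβ : Continuous β) (hβ0 : β 0 = 0)
    (l : Filter ℕ) (hl : l ≤ atTop) (hAa : a < ∫ s in (0:ℝ)..t, Real.exp (β s)) :
    ∀ᶠ n : ℕ in l, (St (stepM (t / n)) (1 / a, 0)
        (fun i => smp β t n (i+1) - smp β t n i) n).1 ≤ 0 := by
  have hA : Tendsto (fun n : ℕ => Ad (t/n) (smp β t n) n) l _ := (riemann_tendsto ht hβ).mono_left hl
  filter_upwards [hl (eventually_gt_atTop 0), hA.eventually_const_lt hAa] with n hn hAn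
  have hn' : (0:ℝ) < n := by exact_mod_cast hn
  exact StM_fst_nonpos (by positivity) ha (smp β t n) (by simp [smp, hβ0]) n hAn.le

def Nseq (m : ℕ) : ℕ := (m + 1) ^ 4

lemma Nseq_tendsto : Tendsto Nseq atTop atTop := by
  refine tendsto_atTop_mono (fun m => ?_) tendsto_id
  unfold Nseq
  exact (Nat.le_succ m).trans (Nat.le_self_pow (by norm_num) _)

lemma c3_lt_top : ∫⁻ x, ENNReal.ofReal (|x| ^ 3) ∂(gaussianReal 0 1) < ⊤ := by
  have h := (memLp_id_gaussianReal (μ := 0) (v := 1) 3).integrable_norm_rpow (by simp) (by simp)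
  have h2 : Integrable (fun x : ℝ => |x| ^ 3) (gaussianReal 0 1) := by
    refine h.congr (ae_of_all _ fun x => ?_)
    simp
  exact h2.lintegral_lt_top

lemma gauss_third {h : ℝ} (hh : 0 < h) :
    ∫⁻ x, ENNReal.ofReal (|x| ^ 3) ∂(gaussianReal 0 h.toNNReal) =
      ENNReal.ofReal (√h ^ 3) * ∫⁻ x, ENNReal.ofReal (|x| ^ 3) ∂(gaussianReal 0 1) := by
  have e : gaussianReal 0 h.toNNReal = (gaussianReal 0 1).map (√h * ·) := by
    rw [gaussianReal_map_const_mul]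
    congr 1
    · simp
    · ext; simp [Real.sq_sqrt hh.le, hh.le]
  rw [e, lintegral_map (by fun_prop) (by fun_prop), ← lintegral_const_mul _ (by fun_prop)]
  refine lintegral_congr fun x => ?_
  rw [← ENNReal.ofReal_mul (by positivity), abs_mul, mul_pow, abs_of_nonneg (Real.sqrt_nonneg h)]

lemma cubic_variation {Ω : Type*} [MeasurableSpace Ω] {P : Measure Ω} {B : ℝ → Ω → ℝ}
    (hB : IsBrownianMotion P B) {t : ℝ} (ht : 0 < t) :
    ∀ᵐ ω ∂P, Tendsto (fun m => ∑ k ∈ Finset.range (Nseq m),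
      |B ((k+1 : ℕ) * (t / Nseq m)) ω - B (k * (t / Nseq m)) ω| ^ 3) atTop (𝓝 0) := by
  set c := ∫⁻ x, ENNReal.ofReal (|x| ^ 3) ∂(gaussianReal 0 1) with hc
  have hct : c ≠ ⊤ := c3_lt_top.ne
  set V : ℕ → Ω → ENNReal := fun m ω => ∑ k ∈ Finset.range (Nseq m),
      ENNReal.ofReal (|B ((k+1 : ℕ) * (t / Nseq m)) ω - B (k * (t / Nseq m)) ω| ^ 3) with hV
  have hm := hB.measurable
  have hVm : ∀ m, Measurable (V m) := fun m => by
    refine Finset.measurable_fun_sum _ fun k _ => ?_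
    have h1 := hm ((k+1 : ℕ) * (t / Nseq m))
    have h2 := hm (k * (t / Nseq m))
    fun_prop
  have hEV : ∀ m, ∫⁻ ω, V m ω ∂P = ENNReal.ofReal (√t ^ 3 * (1 / ((m + 1 : ℕ):ℝ) ^ 2)) * c := by
    intro m
    have hN : (0:ℝ) < (Nseq m : ℝ) := by unfold Nseq; positivity
    have hh : 0 < t / Nseq m := by positivity
    rw [hV]; dsimp only
    rw [lintegral_finsetSum _ (fun k _ => by
      have h1 := hm ((k+1 : ℕ) * (t / Nseq m))
      have h2 := hm (k * (t / Nseq m))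
      fun_prop)]
    have hterm : ∀ k ∈ Finset.range (Nseq m), ∫⁻ ω, 
        ENNReal.ofReal (|B ((k+1 : ℕ) * (t / Nseq m)) ω - B (k * (t / Nseq m)) ω| ^ 3) ∂P
        = ENNReal.ofReal (√(t / Nseq m) ^ 3) * c := by
      intro k _
      rw [hc, ← gauss_third hh]
      have hg := hB.gaussian_increments (k * (t / Nseq m)) ((k+1 : ℕ) * (t / Nseq m))
        (by positivity) (by gcongr; simp)
      rw [show ((k+1 : ℕ):ℝ) * (t / Nseq m) - k * (t / Nseq m) = t / Nseq m by push_cast; ring] at hg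
      have hmeas : Measurable (fun ω => B ((k+1 : ℕ) * (t / Nseq m)) ω - B (k * (t / Nseq m)) ω) :=
        (hm _).sub (hm _)
      rw [← hg, lintegral_map (by fun_prop) hmeas]
    rw [Finset.sum_congr rfl hterm, Finset.sum_const, Finset.card_range, nsmul_eq_mul, ← mul_assoc]
    congr 1
    rw [← ENNReal.ofReal_natCast, ← ENNReal.ofReal_mul (by positivity)]
    congr 1
    have e : √((Nseq m : ℕ) : ℝ) = ((m + 1 : ℕ):ℝ) ^ 2 := by
      rw [Real.sqrt_eq_iff_mul_self_eq (by positivity) (by positivity)]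
      unfold Nseq; push_cast; ring
    rw [Real.sqrt_div ht.le, e]
    unfold Nseq
    push_cast
    field_simp
  have hsum : ∫⁻ ω, ∑' m, V m ω ∂P ≠ ⊤ := by
    rw [lintegral_tsum (fun m => (hVm m).aemeasurable)]
    simp_rw [hEV]
    rw [ENNReal.tsum_mul_right]
    refine ENNReal.mul_ne_top ?_ hct
    have hs : Summable (fun m : ℕ => √t ^ 3 * (1 / ((m + 1 : ℕ):ℝ) ^ 2)) :=
      ((summable_nat_add_iff 1).2 (Real.summable_one_div_nat_pow.2 (by norm_num : 1 < 2))).mul_left _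
    exact hs.tsum_ofReal_ne_top
  filter_upwards [ae_lt_top (Measurable.tsum hVm) hsum] with ω hω
  have h1 := ENNReal.tendsto_atTop_zero_of_tsum_ne_top hω.ne
  have h2 := (ENNReal.tendsto_toReal ENNReal.zero_ne_top).comp h1
  simp only [ENNReal.toReal_zero] at h2
  refine h2.congr fun m => ?_
  simp only [hV, Function.comp]
  rw [← ENNReal.ofReal_sum_of_nonneg (fun i _ => by positivity),
    ENNReal.toReal_ofReal (Finset.sum_nonneg fun i _ => by positivity)]

/-- drifted increments on the grid of mesh `t / n` -/
def Xi {Ω : Type*} (B : ℝ → Ω → ℝ) (t : ℝ) (n : ℕ) (i : ℕ) (ω : Ω) : ℝ :=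
  smp (fun s => B s ω - s / 2) t n (i+1) - smp (fun s => B s ω - s / 2) t n i

lemma Xi_eq {Ω : Type*} (B : ℝ → Ω → ℝ) (t : ℝ) (n : ℕ) (i : ℕ) (ω : Ω) :
    Xi B t n i ω = B ((i+1 : ℕ) * (t / n)) ω - B (i * (t / n)) ω - t / n / 2 := by
  unfold Xi smp; push_cast; ring

section BM
variable {Ω : Type*} [MeasurableSpace Ω] {P : Measure Ω} {B : ℝ → Ω → ℝ}

lemma Xi_meas (hB : IsBrownianMotion P B) (t : ℝ) (n i : ℕ) : Measurable (Xi B t n i) := by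
  have : Xi B t n i = fun ω => B ((i+1 : ℕ) * (t / n)) ω - B (i * (t / n)) ω - t / n / 2 := by
    funext ω; exact Xi_eq B t n i ω
  rw [this]
  exact ((hB.measurable _).sub (hB.measurable _)).sub_const _

lemma Xi_law (hB : IsBrownianMotion P B) {t : ℝ} (ht : 0 < t) {n : ℕ} (hn : 0 < n) (i : ℕ) :
    P.map (Xi B t n i) = gaussianReal (-(t/n)/2) (t/n).toNNReal := by
  have hn' : (0:ℝ) < n := by exact_mod_cast hn
  have hg := hB.gaussian_increments (i * (t / n)) ((i+1 : ℕ) * (t / n))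
    (by positivity) (by gcongr; simp)
  rw [show ((i+1 : ℕ):ℝ) * (t / n) - i * (t / n) = t / n by push_cast; ring] at hg
  have : Xi B t n i = (fun x => x - t/n/2) ∘
      fun ω => B ((i+1 : ℕ) * (t / n)) ω - B (i * (t / n)) ω := by
    funext ω; exact Xi_eq B t n i ω
  have hmeas : Measurable (fun ω => B ((i+1 : ℕ) * (t / n)) ω - B (i * (t / n)) ω) :=
    (hB.measurable _).sub (hB.measurable _)
  rw [this, ← Measure.map_map (by fun_prop) hmeas, hg,
    gaussianReal_map_sub_const]
  congr 1; ring

lemma Xi_indep (hB : IsBrownianMotion P B) {t : ℝ} (ht : 0 < t) {n : ℕ} (hn : 0 < n) :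
    iIndepFun (Xi B t n) P := by
  have hn' : (0:ℝ) < n := by exact_mod_cast hn
  have h := hB.indep_increments (fun i => i * (t / n)) (fun i j hij => by
    have : (i:ℝ) ≤ j := by exact_mod_cast hij
    dsimp only; gcongr) (by simp)
  have h2 := h.comp (fun _ x => x - t/n/2) (fun _ => by fun_prop)
  have e : Xi B t n = fun i => (fun x => x - t/n/2) ∘
      fun ω => B ((i+1 : ℕ) * (t / n)) ω - B (i * (t / n)) ω := by
    funext i ω; exact Xi_eq B t n i ω
  rw [e]; exact h2

lemma path_cont (hB : IsBrownianMotion P B) (ω : Ω) : Continuous (fun s => B s ω - s / 2) :=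
  (hB.continuous_paths ω).sub (by fun_prop)

lemma A_meas (hB : IsBrownianMotion P B) {t : ℝ} (ht : 0 < t) : Measurable (A B t) := by
  have hT : Tendsto (fun (n : ℕ) (ω : Ω) =>
      Ad (t / (n:ℝ)) (fun k : ℕ => B ((k:ℝ) * (t / (n:ℝ))) ω - (k:ℝ) * (t / (n:ℝ)) / 2) n)
      atTop (𝓝 (A B t)) := by
    refine tendsto_pi_nhds.2 fun ω => ?_
    have h := riemann_tendsto ht (path_cont hB ω)
    exact h
  refine measurable_of_tendsto_metrizable (fun n => ?_) hT
  unfold Ad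
  refine Finset.measurable_fun_sum _ fun k _ => ?_
  have h1 := hB.measurable (k * (t / n))
  have h2 := hB.measurable (((k+1 : ℕ):ℝ) * (t / n))
  fun_prop

lemma A_nonneg {Ω : Type*} {B : ℝ → Ω → ℝ} {t : ℝ} (ht : 0 < t) (ω : Ω) : 0 ≤ A B t ω :=
  intervalIntegral.integral_nonneg ht.le fun _ _ => (Real.exp_pos _).le

lemma exp_law (hB : IsBrownianMotion P B) {s : ℝ} (hs : 0 ≤ s) :
    ∫⁻ ω, ENNReal.ofReal (Real.exp (B s ω - s / 2)) ∂P = 1 := by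
  have hg := hB.gaussian_increments 0 s le_rfl hs
  simp only [hB.start, sub_zero] at hg
  have h1 : ∫⁻ ω, ENNReal.ofReal (Real.exp (B s ω - s / 2)) ∂P =
      ∫⁻ x, ENNReal.ofReal (Real.exp (x - s / 2)) ∂(gaussianReal 0 s.toNNReal) := by
    rw [← hg, lintegral_map (by fun_prop) (hB.measurable s)]
  have hexpint : Integrable (fun x => Real.exp (1 * x)) (gaussianReal 0 s.toNNReal) :=
    integrable_exp_mul_gaussianReal 1
  have hmgf := congrFun (mgf_id_gaussianReal (μ := 0) (v := s.toNNReal)) 1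
  rw [mgf] at hmgf
  have h2 : ∀ x, Real.exp (x - s/2) = Real.exp (1 * x) * Real.exp (-(s/2)) := fun x => by
    rw [← Real.exp_add]; congr 1; ring
  rw [h1]
  simp_rw [h2]
  rw [← ofReal_integral_eq_lintegral_ofReal (hexpint.mul_const _) (ae_of_all _ fun x => by positivity),
    integral_mul_const]
  simp only [id] at hmgf
  rw [hmgf, ← Real.exp_add]
  simp [Real.coe_toNNReal _ hs]

lemma A_int (hB : IsBrownianMotion P B) {t : ℝ} (ht : 0 < t) : Integrable (A B t) P := by
  have := hB.isProbabilityMeasure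
  refine ⟨(A_meas hB ht).aestronglyMeasurable, ?_⟩
  rw [hasFiniteIntegral_iff_ofReal (ae_of_all _ fun ω => A_nonneg ht ω)]
  have h1 : ∀ ω, ENNReal.ofReal (A B t ω)
      = ∫⁻ s in Ioc 0 t, ENNReal.ofReal (Real.exp (B s ω - s / 2)) := by
    intro ω
    unfold A
    rw [intervalIntegral.integral_of_le ht.le]
    exact ofReal_integral_eq_lintegral_ofReal
      ((Real.continuous_exp.comp (path_cont hB ω)).intervalIntegrable 0 t).1
      (ae_of_all _ fun s => (Real.exp_pos _).le)
  have hj : Measurable (fun p : ℝ × Ω => B p.1 p.2) :=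
    measurable_uncurry_of_continuous_of_measurable hB.continuous_paths hB.measurable
  have hj' : Measurable (fun p : Ω × ℝ => B p.2 p.1) := hj.comp measurable_swap
  simp_rw [h1]
  rw [lintegral_lintegral_swap (by
    refine Measurable.aemeasurable ?_
    unfold Function.uncurry
    fun_prop)]
  rw [setLIntegral_congr_fun (g := fun _ => 1) measurableSet_Ioc
    (fun s hs => exp_law hB hs.1.le)]
  simp

end BM

section Main
variable {Ω : Type*} [MeasurableSpace Ω] {P : Measure Ω} {B : ℝ → Ω → ℝ}

/-- test function -/
def fK (K : ℝ) (s : ℝ × ℝ) : ENNReal :=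
  if 0 < s.1 then ENNReal.ofReal (min 1 (K * Real.exp (-s.2))) else 0

lemma fK_meas (K : ℝ) : Measurable (fK K) := by
  unfold fK
  exact Measurable.ite (measurableSet_lt (by fun_prop) (by fun_prop)) (by fun_prop) (by fun_prop)

lemma exp_fK (K : ℝ) (s : ℝ × ℝ) (hs : 0 < s.1) :
    ENNReal.ofReal (Real.exp s.2) * fK K s = ENNReal.ofReal (min (Real.exp s.2) K) := by
  unfold fK
  rw [if_pos hs, ← ENNReal.ofReal_mul (Real.exp_pos _).le, mul_min_of_nonneg _ _ (Real.exp_pos _).le,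
    mul_one, mul_left_comm, ← Real.exp_add]
  simp

lemma trunc_identity (hB : IsBrownianMotion P B) {t a : ℝ} (ht : 0 < t) (ha : 0 < a)
    (hatom : P {ω | A B t ω = a} = 0) (K : ℝ) :
    ∫⁻ ω, ENNReal.ofReal (min (Real.exp
        (2 * (Real.exp (B t ω - t / 2) / (a + A B t ω) - 1 / a))) K) ∂P
      = ∫⁻ ω, (if A B t ω < a then ENNReal.ofReal (min 1 (K * Real.exp
        (-(2 * (Real.exp (B t ω - t / 2) / (a - A B t ω) - 1 / a))))) else 0) ∂P := by
  have := hB.isProbabilityMeasure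
  set l : Filter ℕ := map Nseq atTop with hl
  have hl' : l ≤ atTop := Nseq_tendsto
  set SP : ℕ → Ω → ℝ × ℝ := fun n ω => St (stepP (t / n)) (1 / a, 0) (fun i => Xi B t n i ω) n
  set SM : ℕ → Ω → ℝ × ℝ := fun n ω => St (stepM (t / n)) (1 / a, 0) (fun i => Xi B t n i ω) n
  have hNpos : ∀ m, 0 < Nseq m := fun m => by unfold Nseq; positivity
  have hSPm : ∀ n, Measurable (SP n) := fun n => measurable_St (measurable_stepP _) _ (Xi_meas hB t n) n
  have hSMm : ∀ n, Measurable (SM n) := fun n => measurable_St (measurable_stepM _) _ (Xi_meas hB t n) n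
  have hdisc : ∀ m, ∫⁻ ω, ENNReal.ofReal (min (Real.exp (SP (Nseq m) ω).2) K) ∂P
      = ∫⁻ ω, fK K (SM (Nseq m) ω) ∂P := by
    intro m
    have hN : (0:ℝ) < (Nseq m : ℝ) := by exact_mod_cast hNpos m
    have hh : 0 < t / Nseq m := by positivity
    rw [← discrete_identity (Xi_meas hB t (Nseq m)) (Xi_indep hB ht (hNpos m)) hh
      (Xi_law hB ht (hNpos m)) (Nseq m) (1 / a) (fK K) (fK_meas K)
      (fun s hs => by unfold fK; rw [if_neg (not_lt.2 hs)])]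
    refine lintegral_congr fun ω => ?_
    rw [exp_fK]
    have e := StP_fst hh ha (smp (fun s => B s ω - s / 2) t (Nseq m)) (by simp [smp, hB.start]) (Nseq m)
    have h0 := Ad_nonneg hh (smp (fun s => B s ω - s / 2) t (Nseq m)) (Nseq m)
    have h1 : 0 < Real.exp (smp (fun s => B s ω - s / 2) t (Nseq m) (Nseq m)) /
      (a + Ad (t / Nseq m) (smp (fun s => B s ω - s / 2) t (Nseq m)) (Nseq m)) := by positivity
    rw [← e] at h1
    exact h1
  have hcv : ∀ᵐ ω ∂P, Tendsto (fun n => ∑ k ∈ Finset.range n,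
      |smp (fun s => B s ω - s / 2) t n (k+1) - smp (fun s => B s ω - s / 2) t n k + t / n / 2| ^ 3)
      l (𝓝 0) := by
    filter_upwards [cubic_variation hB ht] with ω hω
    rw [hl, tendsto_map'_iff]
    refine hω.congr fun m => ?_
    simp only [Function.comp]
    refine Finset.sum_congr rfl fun k _ => ?_
    congr 2
    have := Xi_eq B t (Nseq m) k ω
    unfold Xi at this
    rw [this]; ring
  have limL : Tendsto (fun m => ∫⁻ ω, ENNReal.ofReal (min (Real.exp (SP (Nseq m) ω).2) K) ∂P) atTop
      (𝓝 (∫⁻ ω, ENNReal.ofReal (min (Real.exp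
        (2 * (Real.exp (B t ω - t / 2) / (a + A B t ω) - 1 / a))) K) ∂P)) := by
    refine tendsto_lintegral_of_dominated_convergence (fun _ => ENNReal.ofReal K) ?_ ?_ ?_ ?_
    · intro m
      have := hSPm (Nseq m)
      fun_prop
    · intro m
      exact ae_of_all _ fun ω => ENNReal.ofReal_le_ofReal (min_le_right _ _)
    · simp
    · filter_upwards [hcv] with ω hω
      have h1 := LP_tendsto ht ha (path_cont hB ω) (by simp [hB.start]) l hl' hω
      rw [hl, tendsto_map'_iff] at h1
      have hc : Continuous (fun x : ℝ => ENNReal.ofReal (min (Real.exp x) K)) :=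
        ENNReal.continuous_ofReal.comp (by fun_prop)
      exact (hc.tendsto _).comp h1
  have limR : Tendsto (fun m => ∫⁻ ω, fK K (SM (Nseq m) ω) ∂P) atTop
      (𝓝 (∫⁻ ω, (if A B t ω < a then ENNReal.ofReal (min 1 (K * Real.exp
        (-(2 * (Real.exp (B t ω - t / 2) / (a - A B t ω) - 1 / a))))) else 0) ∂P)) := by
    refine tendsto_lintegral_of_dominated_convergence (fun _ => 1) ?_ ?_ ?_ ?_
    · intro m
      exact (fK_meas K).comp (hSMm _)
    · intro m
      refine ae_of_all _ fun ω => ?_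
      unfold fK
      dsimp only
      split_ifs
      · rw [← ENNReal.ofReal_one]
        exact ENNReal.ofReal_le_ofReal (min_le_left _ _)
      · simp
    · simp
    · have hne : ∀ᵐ ω ∂P, A B t ω ≠ a := by
        rw [ae_iff]; simpa using hatom
      filter_upwards [hcv, hne] with ω hω hne
      rcases lt_or_gt_of_ne hne with hlt | hgt
      · rw [if_pos hlt]
        obtain ⟨h1, h2⟩ := LM_tendsto ht (path_cont hB ω) (by simp [hB.start]) l hl' hlt hω
        rw [hl, tendsto_map'_iff] at h1
        rw [hl, eventually_map] at h2
        have hc : Continuous (fun x : ℝ => ENNReal.ofReal (min 1 (K * Real.exp (-x)))) :=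
          ENNReal.continuous_ofReal.comp (by fun_prop)
        refine ((hc.tendsto _).comp h1).congr' ?_
        filter_upwards [h2] with m hm
        unfold fK
        rw [if_pos (by exact hm)]
        rfl
      · rw [if_neg (not_lt.2 hgt.le)]
        have h2 := LM_dead ht ha (path_cont hB ω) (by simp [hB.start]) l hl' hgt
        rw [hl, eventually_map] at h2
        refine tendsto_const_nhds.congr' ?_
        filter_upwards [h2] with m hm
        unfold fK
        rw [if_neg (by exact not_lt.2 hm)]
  refine tendsto_nhds_unique limL ?_
  simp_rw [hdisc]
  exact limR

lemma full_identity (hB : IsBrownianMotion P B) {t a : ℝ} (ht : 0 < t) (ha : 0 < a)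
    (hatom : P {ω | A B t ω = a} = 0) :
    ∫⁻ ω, ENNReal.ofReal (Real.exp
        (2 * (Real.exp (B t ω - t / 2) / (a + A B t ω) - 1 / a))) ∂P = P {ω | A B t ω < a} := by
  have hAm := A_meas hB ht
  have hBm := hB.measurable t
  have hset : MeasurableSet {ω | A B t ω < a} := measurableSet_lt hAm measurable_const
  have limL : Tendsto (fun K : ℕ => ∫⁻ ω, ENNReal.ofReal (min (Real.exp
        (2 * (Real.exp (B t ω - t / 2) / (a + A B t ω) - 1 / a))) K) ∂P) atTop
      (𝓝 (∫⁻ ω, ENNReal.ofReal (Real.exp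
        (2 * (Real.exp (B t ω - t / 2) / (a + A B t ω) - 1 / a))) ∂P)) := by
    refine lintegral_tendsto_of_tendsto_of_monotone (fun K => by fun_prop)
      (ae_of_all _ fun ω K K' hK => ?_) (ae_of_all _ fun ω => ?_)
    · have : (K:ℝ) ≤ K' := by exact_mod_cast hK
      exact ENNReal.ofReal_le_ofReal (min_le_min le_rfl this)
    · refine tendsto_const_nhds.congr' ?_
      obtain ⟨n, hn⟩ := exists_nat_ge (Real.exp
        (2 * (Real.exp (B t ω - t / 2) / (a + A B t ω) - 1 / a)))
      filter_upwards [eventually_ge_atTop n] with K hK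
      have : (n:ℝ) ≤ K := by exact_mod_cast hK
      rw [min_eq_left (hn.trans this)]
  have limR : Tendsto (fun K : ℕ => ∫⁻ ω, (if A B t ω < a then ENNReal.ofReal (min 1 (K * Real.exp
        (-(2 * (Real.exp (B t ω - t / 2) / (a - A B t ω) - 1 / a))))) else 0) ∂P) atTop
      (𝓝 (∫⁻ ω, (if A B t ω < a then 1 else 0) ∂P)) := by
    refine lintegral_tendsto_of_tendsto_of_monotone
      (fun K => (Measurable.ite hset (by fun_prop) measurable_const).aemeasurable)
      (ae_of_all _ fun ω K K' hK => ?_) (ae_of_all _ fun ω => ?_)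
    · have : (K:ℝ) ≤ K' := by exact_mod_cast hK
      dsimp only
      split_ifs
      · refine ENNReal.ofReal_le_ofReal (min_le_min le_rfl ?_)
        gcongr
      · exact le_rfl
    · split_ifs
      · refine tendsto_const_nhds.congr' ?_
        set e := Real.exp (-(2 * (Real.exp (B t ω - t / 2) / (a - A B t ω) - 1 / a))) with he
        have he0 : 0 < e := Real.exp_pos _
        obtain ⟨n, hn⟩ := exists_nat_ge (1 / e)
        filter_upwards [eventually_ge_atTop n] with K hK
        have : (n:ℝ) ≤ K := by exact_mod_cast hK
        have h2 : 1 ≤ K * e := by rw [← div_le_iff₀ he0]; linarith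
        rw [min_eq_left h2, ENNReal.ofReal_one]
      · exact tendsto_const_nhds
  have e1 : ∫⁻ ω, (if A B t ω < a then (1:ENNReal) else 0) ∂P = P {ω | A B t ω < a} := by
    rw [← lintegral_indicator_one hset]
    refine lintegral_congr fun ω => ?_
    simp [indicator]
  rw [← e1]
  refine tendsto_nhds_unique limL ?_
  simp_rw [trunc_identity hB ht ha hatom]
  exact limR

/-- the right-hand side function -/
def GG (P : Measure Ω) (B : ℝ → Ω → ℝ) (t u : ℝ) : ℝ :=
  Real.exp (-2 / u) * ∫ ω, Real.exp (2 * Real.exp (B t ω - t / 2) / (u + A B t ω)) ∂P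

lemma split_exp {t a : ℝ} (ω : Ω) :
    Real.exp (2 * (Real.exp (B t ω - t / 2) / (a + A B t ω) - 1 / a))
      = Real.exp (-2 / a) * Real.exp (2 * Real.exp (B t ω - t / 2) / (a + A B t ω)) := by
  rw [← Real.exp_add]; congr 1; ring

lemma integrable_nonatom (hB : IsBrownianMotion P B) {t a : ℝ} (ht : 0 < t) (ha : 0 < a)
    (hatom : P {ω | A B t ω = a} = 0) :
    Integrable (fun ω => Real.exp (2 * Real.exp (B t ω - t / 2) / (a + A B t ω))) P := by
  have := hB.isProbabilityMeasure
  have hAm := A_meas hB ht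
  have hBm := hB.measurable t
  have h1 : Integrable (fun ω => Real.exp
        (2 * (Real.exp (B t ω - t / 2) / (a + A B t ω) - 1 / a))) P := by
    refine ⟨Measurable.aestronglyMeasurable (by fun_prop), ?_⟩
    rw [hasFiniteIntegral_iff_ofReal (ae_of_all _ fun ω => (Real.exp_pos _).le),
      full_identity hB ht ha hatom]
    exact measure_lt_top _ _
  simp_rw [split_exp] at h1
  exact (integrable_const_mul_iff (IsUnit.mk0 _ (Real.exp_pos _).ne') _).1 h1

lemma GG_eq (hB : IsBrownianMotion P B) {t a : ℝ} (ht : 0 < t) (ha : 0 < a)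
    (hatom : P {ω | A B t ω = a} = 0) :
    GG P B t a = P.real {ω | A B t ω < a} := by
  have hAm := A_meas hB ht
  have hBm := hB.measurable t
  have h1 := full_identity hB ht ha hatom
  unfold GG
  rw [measureReal_def, ← h1, ← integral_const_mul, integral_eq_lintegral_of_nonneg_ae
    (ae_of_all _ fun ω => by positivity) (Measurable.aestronglyMeasurable (by fun_prop))]
  simp_rw [split_exp]

lemma nonatom_dense (hB : IsBrownianMotion P B) {t : ℝ} (ht : 0 < t) {x y : ℝ} (hxy : x < y) :
    ∃ u ∈ Ioo x y, P {ω | A B t ω = u} = 0 := by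
  have := hB.isProbabilityMeasure
  have hc : Set.Countable {u : ℝ | 0 < P {ω | A B t ω = u}} :=
    Measure.countable_meas_level_set_pos (A_meas hB ht)
  obtain ⟨u, hu, hu2⟩ := (hc.dense_compl ℝ).exists_mem_open isOpen_Ioo (nonempty_Ioo.2 hxy)
  refine ⟨u, hu2, ?_⟩
  simpa using hu

lemma GG_cont (hB : IsBrownianMotion P B) {t a : ℝ} (ht : 0 < t) (ha : 0 < a) :
    ContinuousAt (GG P B t) a := by
  have hAm := A_meas hB ht
  have hBm := hB.measurable t
  obtain ⟨u, hu, hu0⟩ := nonatom_dense hB ht (x := 0) (y := a) ha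
  unfold GG
  refine ContinuousAt.mul ?_ ?_
  · exact Real.continuous_exp.continuousAt.comp (continuousAt_const.div continuousAt_id ha.ne')
  · refine continuousAt_of_dominated (bound := fun ω =>
      Real.exp (2 * Real.exp (B t ω - t / 2) / (u + A B t ω))) ?_ ?_
      (integrable_nonatom hB ht hu.1 hu0) ?_
    · exact Eventually.of_forall fun v => Measurable.aestronglyMeasurable (by fun_prop)
    · filter_upwards [Ioi_mem_nhds hu.2] with v hv
      refine ae_of_all _ fun ω => ?_
      rw [Real.norm_eq_abs, abs_of_pos (Real.exp_pos _)]
      have h0 := A_nonneg (B := B) ht ω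
      have h1 : u < v := hv
      have h2 := hu.1
      gcongr
    · refine ae_of_all _ fun ω => ?_
      have h0 := A_nonneg (B := B) ht ω
      refine Real.continuous_exp.continuousAt.comp (continuousAt_const.div
        (continuousAt_id.add continuousAt_const) ?_)
      have : 0 < a + A B t ω := by linarith
      exact this.ne'

lemma no_atom (hB : IsBrownianMotion P B) {t a : ℝ} (ht : 0 < t) (ha : 0 < a) :
    P {ω | A B t ω = a} = 0 := by
  have := hB.isProbabilityMeasure
  by_contra hne
  have hpos : 0 < P.real {ω | A B t ω = a} := by
    rw [measureReal_def]
    exact ENNReal.toReal_pos hne (measure_ne_top _ _)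
  set ε := P.real {ω | A B t ω = a} with hε
  obtain ⟨η, hη, hc⟩ := Metric.continuousAt_iff.1 (GG_cont hB ht ha) (ε / 2) (by positivity)
  obtain ⟨u, hu, hu0⟩ := nonatom_dense hB ht (x := max (a - η) 0) (y := a)
    (max_lt (by linarith) ha)
  obtain ⟨v, hv, hv0⟩ := nonatom_dense hB ht (x := a) (y := a + η) (by linarith)
  have hu1 := (max_lt_iff.1 hu.1)
  have h1 := hc (x := u) (by rw [Real.dist_eq, abs_lt]; constructor <;> linarith [hu.2, hu1.1])
  have h2 := hc (x := v) (by rw [Real.dist_eq, abs_lt]; constructor <;> linarith [hv.1, hv.2])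
  rw [Real.dist_eq, abs_lt] at h1 h2
  have g1 := GG_eq hB ht hu1.2 hu0
  have g2 := GG_eq hB ht (ha.trans hv.1) hv0
  have h3 : P.real {ω | A B t ω < u} + ε ≤ P.real {ω | A B t ω < v} := by
    rw [hε, ← measureReal_union]
    · refine measureReal_mono ?_
      rintro ω (h | h)
      · have h' : A B t ω < u := h
        exact h'.trans (hu.2.trans hv.1)
      · have h' : A B t ω = a := h
        exact h'.trans_lt hv.1
    · rw [Set.disjoint_left]
      intro ω h h'
      have e1 : A B t ω < u := h
      have e2 : A B t ω = a := h'
      linarith [hu.2]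
    · exact measurableSet_eq_fun (A_meas hB ht) measurable_const
  linarith [h1.1, h1.2, h2.1, h2.2]

lemma main_aux (hB : IsBrownianMotion P B) {t a : ℝ} (ht : 0 < t) (ha : 0 < a) :
    HasDerivAt (fun u => ∫ ω, max (A B t ω - u) 0 ∂P) (-1 + GG P B t a) a := by
  have := hB.isProbabilityMeasure
  have hAm := A_meas hB ht
  have hAi := A_int hB ht
  have hat := no_atom hB ht ha
  have hset : MeasurableSet {ω | A B t ω < a} := measurableSet_lt hAm measurable_const
  have key := hasDerivAt_integral_of_dominated_loc_of_lip (μ := P)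
    (F := fun u ω => max (A B t ω - u) 0)
    (F' := fun ω => -1 + {ω | A B t ω < a}.indicator (fun _ => (1:ℝ)) ω) (x₀ := a) (s := univ)
    (bound := fun _ => 1) univ_mem
    (Eventually.of_forall fun u => Measurable.aestronglyMeasurable (by fun_prop))
    ((hAi.sub (integrable_const a)).pos_part)
    ((measurable_const.add (measurable_const.indicator hset)).aestronglyMeasurable)
    (ae_of_all _ fun ω => by
      refine LipschitzOnWith.of_dist_le_mul fun x _ y _ => ?_
      rw [Real.dist_eq, Real.dist_eq]
      simp only [NNReal.coe_one, one_mul, map_one]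
      refine (abs_max_sub_max_le_abs _ _ _).trans ?_
      rw [abs_sub_comm x y]
      apply le_of_eq; congr 1; ring)
    (integrable_const 1)
    (by
      have hne : ∀ᵐ ω ∂P, A B t ω ≠ a := by
        rw [ae_iff]; simpa using hat
      filter_upwards [hne] with ω hne
      rcases lt_or_gt_of_ne hne with hlt | hgt
      · rw [indicator_of_mem (by exact hlt)]
        have h1 : HasDerivAt (fun _ : ℝ => (0:ℝ)) (-1 + 1) a := by
          simpa using hasDerivAt_const a (0:ℝ)
        refine h1.congr_of_eventuallyEq ?_
        filter_upwards [Ioi_mem_nhds hlt] with v hv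
        have hv' : A B t ω < v := hv
        exact max_eq_right (by linarith)
      · rw [indicator_of_notMem (by exact not_lt.2 hgt.le)]
        have h1 : HasDerivAt (fun v : ℝ => A B t ω - v) (-1 + 0) a := by
          simpa using (hasDerivAt_id a).const_sub (A B t ω)
        refine h1.congr_of_eventuallyEq ?_
        filter_upwards [Iio_mem_nhds hgt] with v hv
        have hv' : v < A B t ω := hv
        exact max_eq_left (by linarith))
  have h2 := key.2
  rw [integral_add (integrable_const _) ((integrable_const _).indicator hset),
    integral_indicator_const _ hset] at h2
  rw [GG_eq hB ht ha hat]
  simpa using h2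

end Main

end Aux

variable {Ω : Type*} [MeasurableSpace Ω] (P : MeasureTheory.Measure Ω) (B : ℝ → Ω → ℝ)

theorem deriv_expected_max_formula (hB : IsBrownianMotion P B) (t a : ℝ)
    (ht : 0 < t) (ha : 0 < a) :
    HasDerivAt (fun u => ∫ ω, max (A B t ω - u) 0 ∂P)
      (-1 + Real.exp (-2 / a) *
        ∫ ω, Real.exp (2 * Real.exp (B t ω - t / 2) / (a + A B t ω)) ∂P) a := by
  exact main_aux hB ht ha
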